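/- Let X, X', Y, Y' be finite types, set I := X × X' and J := Y × Y', let (M_t, M_f) be a binary measurement on ℂ^X and (N_t, N_f) a binary measurement on ℂ^Y. Let E : Matrix I I ℂ → Matrix I I ℂ and F : Matrix J J ℂ → Matrix J J ℂ be linear, map positive semidefinite matrices to positive semidefinite matrices, and be trace-preserving. Define R¹_t(ρ) := (M_t ⊗ 1_{X'}) * ρ * (M_t ⊗ 1_{X'})ᴴ and R¹_f similarly on Matrix I I ℂ, and R²_t(σ) := (N_t ⊗ 1_{Y'}) * σ * (N_t ⊗ 1_{Y'})ᴴ and R²_f similarly on Matrix J J ℂ. Assume that for every positive semidefinite ρ : Matrix I I ℂ the family n ↦ R¹_f((E ∘ R¹_t)^[n] ρ) is summable with Matrix.trace (∑' n, R¹_f((E ∘ R¹_t)^[n] ρ)) = Matrix.trace ρ, and analogously for every positive semidefinite σ : Matrix J J ℂ with (F, R²_t, R²_f). Define W_c(ρ) := ∑' n, R¹_f((E ∘ R¹_t)^[n] ρ) and W_d(σ) := ∑' n, R²_f((F ∘ R²_t)^[n] σ). Let A, B be expectations on I × J, write M_{t,1} := (M_t ⊗ 1_{X'}) ⊗ 1_J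 and N_{t,2} := 1_I ⊗ (N_t ⊗ 1_{Y'}) (similarly with f), and set C := M_{t,1}ᴴ * N_{t,2}ᴴ * A * N_{t,2} * M_{t,1} + M_{f,1}ᴴ * N_{f,2}ᴴ * B * N_{f,2} * M_{f,1}. If qRHL(A, E, F, C) holds, then qRHL(C, W_c, W_d, B) holds. [Rule JointWhile] -/

import Mathlib

open Matrix Kronecker ComplexOrder

noncomputable section

/-- Partial trace over the second factor: `tr₂(ρ) i i' = ∑ j, ρ (i,j) (i',j)`. -/
def trB {I J : Type*} [Fintype J] (ρ : Matrix (I × J) (I × J) ℂ) : Matrix I I ℂ :=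
  Matrix.of fun i i' => ∑ j, ρ (i, j) (i', j)

/-- Partial trace over the first factor: `tr₁(ρ) j j' = ∑ i, ρ (i,j) (i,j')`. -/
def trA {I J : Type*} [Fintype I] (ρ : Matrix (I × J) (I × J) ℂ) : Matrix J J ℂ :=
  Matrix.of fun j j' => ∑ i, ρ (i, j) (i, j')

/-- `ρ` is separable iff it is a finite sum of Kronecker products of
positive semidefinite matrices. -/
def Separable {I J : Type*} [Fintype I] [Fintype J]
    (ρ : Matrix (I × J) (I × J) ℂ) : Prop :=
  ∃ (n : ℕ) (σ : Fin n → Matrix I I ℂ) (τ : Fin n → Matrix J J ℂ),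
    (∀ k, (σ k).PosSemidef) ∧ (∀ k, (τ k).PosSemidef) ∧ ρ = ∑ k, σ k ⊗ₖ τ k

/-- The expectation-qRHL judgment `qRHL(A, E1, E2, B)`. -/
def qRHL {I J : Type*} [Fintype I] [Fintype J]
    (A : Matrix (I × J) (I × J) ℂ)
    (E1 : Matrix I I ℂ → Matrix I I ℂ) (E2 : Matrix J J ℂ → Matrix J J ℂ)
    (B : Matrix (I × J) (I × J) ℂ) : Prop :=
  ∀ ρ : Matrix (I × J) (I × J) ℂ, ρ.PosSemidef → Separable ρ →
    ∃ ρ' : Matrix (I × J) (I × J) ℂ, ρ'.PosSemidef ∧ Separable ρ' ∧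
      trB ρ' = E1 (trB ρ) ∧ trA ρ' = E2 (trA ρ) ∧
      (Matrix.trace (A * ρ)).re ≤ (Matrix.trace (B * ρ')).re

/-!
Couple the two loops from a separable input: let both guards answer alike, so that a joint state
`r n` enters the bodies as `kraus (P ⊗ₖ S) (r n)`, and obtain `r (n + 1)` from the judgment for the
bodies. Outcomes on which the guards disagree are dropped, so the marginals of `r n` are only
dominated by the states of the single loops after `n` iterations. Termination still forces
`r n → 0`, and the pre-expectation telescopes into the expectation of `B` in the sum `ω` of all
joint exit states. Adding a multiple of the product of the two missing marginals to `ω` corrects its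
marginals and does not lower the expectation of `B ≥ 0`.
-/

section InfiniteSums

open scoped Topology

variable {V : Type*} [AddCommGroup V] [Module ℝ V]

theorem exists_forall_mem_span_range_fin [FiniteDimensional ℝ V] (x : ℕ → V) :
    ∃ N, ∀ n, x n ∈ Submodule.span ℝ (Set.range fun i : Fin N => x i) := by
  let U : ℕ →o Submodule ℝ V :=
    ⟨fun N => Submodule.span ℝ (Set.range fun i : Fin N => x i), fun M N hMN =>
      Submodule.span_mono (Set.range_subset_iff.mpr fun i => ⟨Fin.castLE hMN i, rfl⟩)⟩
  obtain ⟨N, hN⟩ := monotone_stabilizes_iff_noetherian.mpr (inferInstance : IsNoetherian ℝ V) U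
  have mem_U_succ (n : ℕ) : x n ∈ U (n + 1) := Submodule.subset_span ⟨Fin.last n, rfl⟩
  refine ⟨N, fun n => ?_⟩
  change x n ∈ U N
  obtain hn | hn := le_total N (n + 1)
  · exact hN _ hn ▸ mem_U_succ n
  · exact U.monotone hn (mem_U_succ n)

variable [TopologicalSpace V] [IsTopologicalAddGroup V] [ContinuousSMul ℝ V] [T2Space V]

theorem eventually_sum_add_mem_pointedCone {ι : Type*} [Fintype ι] (K : PointedCone ℝ V)
    {v : ι → V} (hv : ∀ i, v i ∈ K) :
    ∀ᶠ t : Submodule.span ℝ (Set.range v) in 𝓝 0, ∑ i, v i + (t : V) ∈ K := by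
  set U := Submodule.span ℝ (Set.range v)
  have : FiniteDimensional ℝ U := FiniteDimensional.span_of_finite ℝ (Set.finite_range v)
  let L : (ι → ℝ) →ₗ[ℝ] U := (Fintype.linearCombination ℝ v).codRestrict U fun c =>
    (Fintype.range_linearCombination ℝ v).le (LinearMap.mem_range_self _ c)
  have L_surjective : L.range = ⊤ := by
    rw [LinearMap.range_codRestrict, Fintype.range_linearCombination, Submodule.comap_subtype_self]
  obtain ⟨coeff, hcoeff⟩ := L.exists_rightInverse_of_surjective L_surjective
  have coeff_small : ∀ᶠ t in 𝓝 0, ∀ i, -1 < coeff t i := by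
    refine Filter.eventually_all.mpr fun i => ?_
    have hcont : Continuous fun t => coeff t i :=
      (continuous_apply i).comp coeff.continuous_of_finiteDimensional
    exact hcont.continuousAt.eventually_const_lt (by simp)
  filter_upwards [coeff_small] with t ht
  have ht_eq : (t : V) = ∑ i, coeff t i • v i :=
    (congrArg Subtype.val (LinearMap.congr_fun hcoeff t)).symm
  rw [ht_eq, ← Finset.sum_add_distrib]
  refine sum_mem fun i _ => ?_
  rw [← one_smul ℝ (v i), smul_smul, mul_one, ← add_smul]
  exact K.smul_mem (by linarith [ht i]) (hv i)

/-- `K` need not be closed. Finitely many terms of the series span all of them, so their sum is in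
the interior of `K` relative to that span and absorbs a late enough tail. -/
theorem mem_pointedCone_of_hasSum [FiniteDimensional ℝ V] (K : PointedCone ℝ V) {x : ℕ → V} {s : V}
    (hx : ∀ n, x n ∈ K) (h : HasSum x s) : s ∈ K := by
  obtain ⟨N, hN⟩ := exists_forall_mem_span_range_fin x
  set U := Submodule.span ℝ (Set.range fun i : Fin N => x i)
  have partial_mem (M : ℕ) : ∑ n ∈ Finset.range M, x n ∈ U := sum_mem fun n _ => hN n
  have s_mem : s ∈ U := U.closed_of_finiteDimensional.mem_of_tendsto h.tendsto_sum_nat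
    (.of_forall partial_mem)
  let tail (M : ℕ) : U := ⟨s - ∑ n ∈ Finset.range M, x n, U.sub_mem s_mem (partial_mem M)⟩
  have tail_tendsto : Filter.Tendsto tail Filter.atTop (𝓝 0) :=
    tendsto_subtype_rng.mpr (by simpa [tail] using h.tendsto_sum_nat.const_sub s)
  obtain ⟨M, hNM, hM⟩ := ((Filter.eventually_ge_atTop N).and
    (tail_tendsto.eventually (eventually_sum_add_mem_pointedCone K fun i : Fin N => hx i))).exists
  have hs : s = (∑ i : Fin N, x i + (tail M : V)) + ∑ n ∈ Finset.Ico N M, x n := by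
    rw [Fin.sum_univ_eq_sum_range x, add_right_comm, Finset.sum_range_add_sum_Ico x hNM]
    exact (add_sub_cancel _ _).symm
  rw [hs]
  exact K.add_mem hM (sum_mem fun n _ => hx n)

end InfiniteSums

section Loewner

open scoped MatrixOrder Topology

variable {m n : Type*}

theorem monotone_of_map_posSemidef {E : Matrix m m ℂ →ₗ[ℂ] Matrix n n ℂ}
    (hE : ∀ ρ : Matrix m m ℂ, ρ.PosSemidef → (E ρ).PosSemidef) : Monotone E := fun ρ σ h => by
  simpa only [le_iff, map_sub] using hE _ (le_iff.mp h)

theorem hasSum_le_hasSum_of_loewner [Finite n] {f g : ℕ → Matrix n n ℂ} {a b : Matrix n n ℂ}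
    (h : ∀ k, f k ≤ g k) (hf : HasSum f a) (hg : HasSum g b) : a ≤ b := by
  have := Fintype.ofFinite n
  exact sub_nonneg.mp <| (PointedCone.mem_positive ℝ _).mp <|
    mem_pointedCone_of_hasSum (.positive ℝ (Matrix n n ℂ)) (fun k => sub_nonneg.mpr (h k))
      (hg.sub hf)

variable [Fintype n]

theorem trace_mul_le_trace_mul {A B C : Matrix n n ℂ} (hA : 0 ≤ A) (hBC : B ≤ C) :
    (A * B).trace ≤ (A * C).trace := by
  classical
  obtain ⟨D, rfl⟩ := CStarAlgebra.nonneg_iff_eq_star_mul_self.mp hA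
  have h := ((le_iff.mp hBC).mul_mul_conjTranspose_same D).trace_nonneg
  rwa [Matrix.mul_sub, Matrix.sub_mul, trace_sub, sub_nonneg, trace_mul_comm,
    ← Matrix.mul_assoc, trace_mul_comm (D * C), ← Matrix.mul_assoc] at h

theorem re_trace_le_re_trace {A B : Matrix n n ℂ} (h : A ≤ B) : A.trace.re ≤ B.trace.re :=
  (Complex.le_def.mp (OrderHomClass.mono (tracePositiveLinearMap n ℂ ℂ) h)).1

theorem re_trace_nonneg {A : Matrix n n ℂ} (h : 0 ≤ A) : 0 ≤ A.trace.re := by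
  simpa using re_trace_le_re_trace h

theorem trace_smul_trace_inv_smul {A : Matrix n n ℂ} (hA : A.PosSemidef) :
    A.trace • A.trace⁻¹ • A = A := by
  by_cases h : A.trace = 0
  · simp [hA.trace_eq_zero_iff.mp h]
  · rw [smul_inv_smul₀ h]

section Frobenius

open scoped Matrix.Norms.Frobenius

theorem frobenius_norm_le_re_trace {A : Matrix n n ℂ} (hA : 0 ≤ A) : ‖A‖ ≤ A.trace.re := by
  classical
  obtain ⟨D, rfl⟩ := CStarAlgebra.nonneg_iff_eq_star_mul_self.mp hA
  calc ‖Dᴴ * D‖ ≤ ‖Dᴴ‖ * ‖D‖ := frobenius_norm_mul _ _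
    _ = ‖D‖ ^ 2 := by rw [frobenius_norm_conjTranspose, sq]
    _ = ∑ i, ∑ j, ‖D i j‖ ^ 2 := by
      rw [frobenius_norm_def, ← Real.sqrt_eq_rpow, Real.sq_sqrt (by positivity)]
      norm_cast
    _ = (Dᴴ * D).trace.re := by
      simp only [← Complex.normSq_eq_norm_sq, Complex.normSq_apply, trace, diag_apply, mul_apply,
        conjTranspose_apply, RCLike.star_def, Complex.re_sum, Complex.mul_re, Complex.conj_re,
        Complex.conj_im, neg_mul, sub_neg_eq_add]
      exact Finset.sum_comm

theorem summable_of_summable_re_trace {f : ℕ → Matrix n n ℂ} (hf : ∀ k, 0 ≤ f k)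
    (h : Summable fun k => (f k).trace.re) : Summable f :=
  .of_norm_bounded h fun k => frobenius_norm_le_re_trace (hf k)

theorem tendsto_zero_of_tendsto_re_trace {f : ℕ → Matrix n n ℂ} (hf : ∀ k, 0 ≤ f k)
    (h : Filter.Tendsto (fun k => (f k).trace.re) Filter.atTop (𝓝 0)) :
    Filter.Tendsto f Filter.atTop (𝓝 0) :=
  squeeze_zero_norm (fun k => frobenius_norm_le_re_trace (hf k)) h

end Frobenius

/-- The completely positive map `ρ ↦ V * ρ * Vᴴ` with the single Kraus operator `V`. For a
measurement operator `V` it yields the unnormalised state after the corresponding outcome. -/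
def kraus (V : Matrix m n ℂ) : Matrix n n ℂ →ₗ[ℂ] Matrix m m ℂ where
  toFun ρ := V * ρ * Vᴴ
  map_add' _ _ := by rw [Matrix.mul_add, Matrix.add_mul]
  map_smul' _ _ := by rw [Matrix.mul_smul, Matrix.smul_mul, RingHom.id_apply]

theorem kraus_apply (V : Matrix m n ℂ) (ρ : Matrix n n ℂ) : kraus V ρ = V * ρ * Vᴴ := rfl

theorem posSemidef_kraus [Finite m] {ρ : Matrix n n ℂ} (hρ : ρ.PosSemidef) (V : Matrix m n ℂ) :
    (kraus V ρ).PosSemidef := hρ.mul_mul_conjTranspose_same V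

theorem kraus_monotone [Finite m] (V : Matrix m n ℂ) : Monotone (kraus V) :=
  monotone_of_map_posSemidef fun _ hρ => posSemidef_kraus hρ V

theorem trace_kraus_le [Fintype m] [DecidableEq n] {V : Matrix m n ℂ} (hV : Vᴴ * V ≤ 1)
    {ρ : Matrix n n ℂ} (hρ : ρ.PosSemidef) : (kraus V ρ).trace ≤ ρ.trace := by
  simpa only [kraus_apply, Matrix.mul_one, Matrix.mul_assoc, trace_mul_comm V]
    using trace_mul_le_trace_mul hρ.nonneg hV

end Loewner

section PartialTrace

variable {I J : Type*}

theorem trB_kronecker [Fintype J] (σ : Matrix I I ℂ) (τ : Matrix J J ℂ) :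
    trB (σ ⊗ₖ τ) = τ.trace • σ := by
  ext i i'
  simp [trB, trace, ← Finset.mul_sum, mul_comm]

theorem trA_kronecker [Fintype I] (σ : Matrix I I ℂ) (τ : Matrix J J ℂ) :
    trA (σ ⊗ₖ τ) = σ.trace • τ := by
  ext j j'
  simp [trA, trace, ← Finset.sum_mul]

theorem trB_zero [Fintype J] : trB (0 : Matrix (I × J) (I × J) ℂ) = 0 := by
  ext; simp [trB]

theorem trA_zero [Fintype I] : trA (0 : Matrix (I × J) (I × J) ℂ) = 0 := by
  ext; simp [trA]

theorem trB_add [Fintype J] (ρ ρ' : Matrix (I × J) (I × J) ℂ) :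
    trB (ρ + ρ') = trB ρ + trB ρ' := by
  ext; simp [trB, Finset.sum_add_distrib]

theorem trA_add [Fintype I] (ρ ρ' : Matrix (I × J) (I × J) ℂ) :
    trA (ρ + ρ') = trA ρ + trA ρ' := by
  ext; simp [trA, Finset.sum_add_distrib]

theorem hasSum_trB [Fintype J] {f : ℕ → Matrix (I × J) (I × J) ℂ} {ρ : Matrix (I × J) (I × J) ℂ}
    (h : HasSum f ρ) : HasSum (fun n => trB (f n)) (trB ρ) :=
  h.map (AddMonoidHom.mk' trB trB_add) <|
    continuous_matrix fun i i' => by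
      simp only [AddMonoidHom.mk'_apply, trB, of_apply]
      fun_prop

theorem hasSum_trA [Fintype I] {f : ℕ → Matrix (I × J) (I × J) ℂ} {ρ : Matrix (I × J) (I × J) ℂ}
    (h : HasSum f ρ) : HasSum (fun n => trA (f n)) (trA ρ) :=
  h.map (AddMonoidHom.mk' trA trA_add) <|
    continuous_matrix fun j j' => by
      simp only [AddMonoidHom.mk'_apply, trA, of_apply]
      fun_prop

variable [Fintype I] [Fintype J]

theorem trace_trB (ρ : Matrix (I × J) (I × J) ℂ) : (trB ρ).trace = ρ.trace := by
  simp only [trB, trace, diag_apply, of_apply, Fintype.sum_prod_type]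

theorem trace_trA (ρ : Matrix (I × J) (I × J) ℂ) : (trA ρ).trace = ρ.trace := by
  simp only [trA, trace, diag_apply, of_apply, Fintype.sum_prod_type_right]

end PartialTrace

section SeparableMatrices

variable {I J : Type*} [Fintype I] [Fintype J]

namespace Separable

theorem zero : Separable (0 : Matrix (I × J) (I × J) ℂ) :=
  ⟨0, 0, 0, fun _ => .zero, fun _ => .zero, by simp⟩

theorem kronecker {σ : Matrix I I ℂ} {τ : Matrix J J ℂ} (hσ : σ.PosSemidef) (hτ : τ.PosSemidef) :
    Separable (σ ⊗ₖ τ) :=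
  ⟨1, fun _ => σ, fun _ => τ, fun _ => hσ, fun _ => hτ, by simp⟩

theorem add {ρ ρ' : Matrix (I × J) (I × J) ℂ} (h : Separable ρ) (h' : Separable ρ') :
    Separable (ρ + ρ') := by
  obtain ⟨n, σ, τ, hσ, hτ, rfl⟩ := h
  obtain ⟨n', σ', τ', hσ', hτ', rfl⟩ := h'
  exact ⟨n + n', Fin.append σ σ', Fin.append τ τ',
    fun k => k.addCases (by simpa using hσ) (by simpa using hσ'),
    fun k => k.addCases (by simpa using hτ) (by simpa using hτ'),
    by simp [Fin.sum_univ_add]⟩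

theorem induction {motive : (ρ : Matrix (I × J) (I × J) ℂ) → Separable ρ → Prop}
    (zero : motive 0 zero)
    (add : ∀ ρ ρ' hρ hρ', motive ρ hρ → motive ρ' hρ' → motive (ρ + ρ') (hρ.add hρ'))
    (kronecker : ∀ (σ : Matrix I I ℂ) (τ : Matrix J J ℂ) hσ hτ,
      motive (σ ⊗ₖ τ) (kronecker hσ hτ))
    {ρ : Matrix (I × J) (I × J) ℂ} (h : Separable ρ) : motive ρ h := by
  have exists_motive : ∃ h, motive ρ h := by
    obtain ⟨n, σ, τ, hσ, hτ, rfl⟩ := h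
    exact Finset.sum_induction _ (fun ρ => ∃ h, motive ρ h)
      (fun ρ ρ' ⟨_, ih⟩ ⟨_, ih'⟩ => ⟨_, add ρ ρ' _ _ ih ih'⟩) ⟨_, zero⟩
      fun k _ => ⟨_, kronecker _ _ (hσ k) (hτ k)⟩
  exact exists_motive.2

theorem posSemidef {ρ : Matrix (I × J) (I × J) ℂ} (h : Separable ρ) : ρ.PosSemidef := by
  induction h using Separable.induction with
  | zero => exact .zero
  | add ρ ρ' _ _ hρ hρ' => exact hρ.add hρ'
  | kronecker σ τ hσ hτ => exact hσ.kronecker hτ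

theorem smul {ρ : Matrix (I × J) (I × J) ℂ} (h : Separable ρ) {c : ℝ} (hc : 0 ≤ c) :
    Separable (c • ρ) := by
  induction h using Separable.induction with
  | zero => simpa only [smul_zero] using zero
  | add ρ ρ' _ _ hρ hρ' => simpa only [smul_add] using hρ.add hρ'
  | kronecker σ τ hσ hτ => simpa only [smul_kronecker] using kronecker (hσ.smul hc) hτ

theorem trB_posSemidef {ρ : Matrix (I × J) (I × J) ℂ} (h : Separable ρ) :
    (trB ρ).PosSemidef := by
  induction h using Separable.induction with
  | zero => simpa only [trB_zero] using .zero
  | add ρ ρ' _ _ hρ hρ' => simpa only [trB_add] using hρ.add hρ'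
  | kronecker σ τ hσ hτ => simpa only [trB_kronecker] using hσ.smul hτ.trace_nonneg

theorem trA_posSemidef {ρ : Matrix (I × J) (I × J) ℂ} (h : Separable ρ) :
    (trA ρ).PosSemidef := by
  induction h using Separable.induction with
  | zero => simpa only [trA_zero] using .zero
  | add ρ ρ' _ _ hρ hρ' => simpa only [trA_add] using hρ.add hρ'
  | kronecker σ τ hσ hτ => simpa only [trA_kronecker] using hτ.smul hσ.trace_nonneg

end Separable

/-- The cone of separable matrices. -/
def separableCone (I J : Type*) [Fintype I] [Fintype J] :
    PointedCone ℝ (Matrix (I × J) (I × J) ℂ) where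
  carrier := {ρ | Separable ρ}
  zero_mem' := .zero
  add_mem' := .add
  smul_mem' c _ hρ := hρ.smul c.2

theorem Separable.of_hasSum {f : ℕ → Matrix (I × J) (I × J) ℂ} {ρ : Matrix (I × J) (I × J) ℂ}
    (hf : ∀ n, Separable (f n)) (h : HasSum f ρ) : Separable ρ :=
  mem_pointedCone_of_hasSum (separableCone I J) hf h

open scoped MatrixOrder

theorem exists_separable_coupling {α : Matrix I I ℂ} {β : Matrix J J ℂ} (hα : α.PosSemidef)
    (hβ : β.PosSemidef) (h : α.trace = β.trace) :
    ∃ κ : Matrix (I × J) (I × J) ℂ, Separable κ ∧ trB κ = α ∧ trA κ = β := by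
  refine ⟨(α.trace⁻¹ • α) ⊗ₖ β, .kronecker (hα.smul (inv_nonneg.mpr hα.trace_nonneg)) hβ, ?_, ?_⟩
  · rw [trB_kronecker, ← h, trace_smul_trace_inv_smul hα]
  · rw [trA_kronecker, trace_smul, h, smul_eq_mul, mul_comm, mul_smul,
      trace_smul_trace_inv_smul hβ]

theorem exists_separable_ge_of_marginals_le {ω : Matrix (I × J) (I × J) ℂ} (hω : Separable ω)
    {α : Matrix I I ℂ} {β : Matrix J J ℂ} (hα : trB ω ≤ α) (hβ : trA ω ≤ β)
    (h : α.trace = β.trace) :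
    ∃ ρ, Separable ρ ∧ ω ≤ ρ ∧ trB ρ = α ∧ trA ρ = β := by
  obtain ⟨κ, hκ, hκα, hκβ⟩ := exists_separable_coupling (le_iff.mp hα) (le_iff.mp hβ)
    (by rw [trace_sub, trace_sub, trace_trB, trace_trA, h])
  exact ⟨ω + κ, hω.add hκ, le_add_of_nonneg_right hκ.posSemidef.nonneg,
    by rw [trB_add, hκα, add_sub_cancel], by rw [trA_add, hκβ, add_sub_cancel]⟩

variable {I' J' : Type*}

theorem kraus_kronecker_kronecker (P : Matrix I' I ℂ) (S : Matrix J' J ℂ) (σ : Matrix I I ℂ)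
    (τ : Matrix J J ℂ) : kraus (P ⊗ₖ S) (σ ⊗ₖ τ) = kraus P σ ⊗ₖ kraus S τ := by
  simp only [kraus_apply, conjTranspose_kronecker, mul_kronecker_mul]

namespace Separable

theorem kraus_kronecker [Fintype I'] [Fintype J'] {ρ : Matrix (I × J) (I × J) ℂ}
    (h : Separable ρ) (P : Matrix I' I ℂ) (S : Matrix J' J ℂ) : Separable (kraus (P ⊗ₖ S) ρ) := by
  induction h using Separable.induction with
  | zero => simpa only [map_zero] using zero
  | add ρ ρ' _ _ hρ hρ' => simpa only [map_add] using hρ.add hρ'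
  | kronecker σ τ hσ hτ =>
    rw [kraus_kronecker_kronecker]
    exact kronecker (posSemidef_kraus hσ P) (posSemidef_kraus hτ S)

theorem trB_kraus_kronecker_le [Finite I'] [Fintype J'] [DecidableEq J]
    {ρ : Matrix (I × J) (I × J) ℂ} (h : Separable ρ) (P : Matrix I' I ℂ)
    {S : Matrix J' J ℂ} (hS : Sᴴ * S ≤ 1) :
    trB (kraus (P ⊗ₖ S) ρ) ≤ kraus P (trB ρ) := by
  have := Fintype.ofFinite I'
  induction h using Separable.induction with
  | zero => simp only [map_zero, trB_zero, le_refl]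
  | add ρ ρ' _ _ hρ hρ' => simpa only [map_add, trB_add] using add_le_add hρ hρ'
  | kronecker σ τ hσ hτ =>
    rw [kraus_kronecker_kronecker, trB_kronecker, trB_kronecker, map_smul]
    exact smul_le_smul_of_nonneg_right (trace_kraus_le hS hτ) (posSemidef_kraus hσ P).nonneg

theorem trA_kraus_kronecker_le [Fintype I'] [Finite J'] [DecidableEq I]
    {ρ : Matrix (I × J) (I × J) ℂ} (h : Separable ρ) {P : Matrix I' I ℂ}
    (hP : Pᴴ * P ≤ 1) (S : Matrix J' J ℂ) :
    trA (kraus (P ⊗ₖ S) ρ) ≤ kraus S (trA ρ) := by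
  have := Fintype.ofFinite J'
  induction h using Separable.induction with
  | zero => simp only [map_zero, trA_zero, le_refl]
  | add ρ ρ' _ _ hρ hρ' => simpa only [map_add, trA_add] using add_le_add hρ hρ'
  | kronecker σ τ hσ hτ =>
    rw [kraus_kronecker_kronecker, trA_kronecker, trA_kronecker, map_smul]
    exact smul_le_smul_of_nonneg_right (trace_kraus_le hP hσ) (posSemidef_kraus hτ S).nonneg

end Separable

end SeparableMatrices

section WhileLoop

open scoped Topology

variable {I : Type*} [Fintype I]

/-- The state in which the loop `while (P, Q) do E` is left after exactly `n` iterations, where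
`P` and `Q` are the measurement operators of its guard for the outcomes true and false. -/
def whileExit (E : Matrix I I ℂ → Matrix I I ℂ) (P Q ρ : Matrix I I ℂ) (n : ℕ) : Matrix I I ℂ :=
  kraus Q ((E ∘ kraus P)^[n] ρ)

/-- The semantics of the loop `while (P, Q) do E`; it is `0` where the series diverges. -/
def whileLoop (E : Matrix I I ℂ → Matrix I I ℂ) (P Q ρ : Matrix I I ℂ) : Matrix I I ℂ :=
  ∑' n, whileExit E P Q ρ n

/-- The loop `while (P, Q) do E` terminates with probability one on every input. -/
def Terminates (E : Matrix I I ℂ → Matrix I I ℂ) (P Q : Matrix I I ℂ) : Prop :=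
  ∀ ρ : Matrix I I ℂ, ρ.PosSemidef →
    Summable (whileExit E P Q ρ) ∧ (whileLoop E P Q ρ).trace = ρ.trace

theorem whileExit_iterate (E : Matrix I I ℂ → Matrix I I ℂ) (P Q ρ : Matrix I I ℂ) (n k : ℕ) :
    whileExit E P Q ((E ∘ kraus P)^[n] ρ) k = whileExit E P Q ρ (k + n) := by
  rw [whileExit, whileExit, Function.iterate_add_apply]

theorem Terminates.hasSum {E : Matrix I I ℂ → Matrix I I ℂ} {P Q ρ : Matrix I I ℂ}
    (h : Terminates E P Q) (hρ : ρ.PosSemidef) :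
    HasSum (whileExit E P Q ρ) (whileLoop E P Q ρ) :=
  (h ρ hρ).1.hasSum

/-- The state after `n` iterations has the trace of what the loop still outputs from there on,
which is a tail of the series. -/
theorem Terminates.tendsto_trace_iterate {E : Matrix I I ℂ → Matrix I I ℂ} {P Q ρ : Matrix I I ℂ}
    (h : Terminates E P Q) (hρ : ∀ n, ((E ∘ kraus P)^[n] ρ).PosSemidef) :
    Filter.Tendsto (fun n => ((E ∘ kraus P)^[n] ρ).trace) Filter.atTop (𝓝 0) := by
  have trace_eq_tail (n : ℕ) :
      ((E ∘ kraus P)^[n] ρ).trace = (∑' k, whileExit E P Q ρ (k + n)).trace := by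
    simp only [← (h _ (hρ n)).2, whileLoop, whileExit_iterate]
  have continuous_trace : Continuous (trace : Matrix I I ℂ → ℂ) := continuous_id.matrix_trace
  simp only [trace_eq_tail]
  simpa only [trace_zero, Function.comp_def] using
    (continuous_trace.tendsto 0).comp (tendsto_sum_nat_add (whileExit E P Q ρ))

/-- The pre-expectation of `A` under the outcome with operator `K` and of `B` under the outcome
with operator `L`. -/
def measurePre (K L A B : Matrix I I ℂ) : Matrix I I ℂ :=
  Kᴴ * A * K + Lᴴ * B * L

theorem trace_measurePre_mul (K L A B ρ : Matrix I I ℂ) :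
    (measurePre K L A B * ρ).trace = (A * kraus K ρ).trace + (B * kraus L ρ).trace := by
  have move_conj (V D : Matrix I I ℂ) : (Vᴴ * D * V * ρ).trace = (D * kraus V ρ).trace := by
    rw [kraus_apply, Matrix.mul_assoc, Matrix.mul_assoc, trace_mul_comm]
    simp only [Matrix.mul_assoc]
  rw [measurePre, Matrix.add_mul, trace_add, move_conj, move_conj]

end WhileLoop

section CoupledRun

open scoped MatrixOrder Topology

variable {I J : Type*} [Fintype I] [Fintype J]
  {E : Matrix I I ℂ → Matrix I I ℂ} {F : Matrix J J ℂ → Matrix J J ℂ}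
  {P Q : Matrix I I ℂ} {S T : Matrix J J ℂ} {A B C : Matrix (I × J) (I × J) ℂ}
  {r : ℕ → Matrix (I × J) (I × J) ℂ}

/-- `r n` is a joint state of two loops that have both entered their bodies `E` and `F` exactly
`n` times; `A` and `C` are the pre- and post-expectation of the pair of bodies. -/
structure IsCoupledRun (E : Matrix I I ℂ → Matrix I I ℂ) (F : Matrix J J ℂ → Matrix J J ℂ)
    (P : Matrix I I ℂ) (S : Matrix J J ℂ) (A C : Matrix (I × J) (I × J) ℂ)
    (r : ℕ → Matrix (I × J) (I × J) ℂ) : Prop where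
  separable (n : ℕ) : Separable (r n)
  trB_succ (n : ℕ) : trB (r (n + 1)) = E (trB (kraus (P ⊗ₖ S) (r n)))
  trA_succ (n : ℕ) : trA (r (n + 1)) = F (trA (kraus (P ⊗ₖ S) (r n)))
  trace_le (n : ℕ) : (A * kraus (P ⊗ₖ S) (r n)).trace.re ≤ (C * r (n + 1)).trace.re

theorem qRHL.exists_isCoupledRun (h : qRHL A E F C) (P : Matrix I I ℂ) (S : Matrix J J ℂ)
    {ρ : Matrix (I × J) (I × J) ℂ} (hρ : Separable ρ) :
    ∃ r, r 0 = ρ ∧ IsCoupledRun E F P S A C r := by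
  have exists_next (ρ : {ρ : Matrix (I × J) (I × J) ℂ // Separable ρ}) :
      ∃ ρ' : {ρ : Matrix (I × J) (I × J) ℂ // Separable ρ},
        trB ρ'.1 = E (trB (kraus (P ⊗ₖ S) ρ.1)) ∧ trA ρ'.1 = F (trA (kraus (P ⊗ₖ S) ρ.1)) ∧
          (A * kraus (P ⊗ₖ S) ρ.1).trace.re ≤ (C * ρ'.1).trace.re := by
    have body_separable := ρ.2.kraus_kronecker P S
    obtain ⟨ρ', _, hρ', h'⟩ := h _ body_separable.posSemidef body_separable
    exact ⟨⟨ρ', hρ'⟩, h'⟩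
  choose next next_trB next_trA next_le using exists_next
  have iterate_succ (n : ℕ) : next^[n + 1] ⟨ρ, hρ⟩ = next (next^[n] ⟨ρ, hρ⟩) :=
    Function.iterate_succ_apply' next n _
  refine ⟨fun n => (next^[n] ⟨ρ, hρ⟩).1, rfl, fun n => (next^[n] ⟨ρ, hρ⟩).2, fun n => ?_,
    fun n => ?_, fun n => ?_⟩ <;> rw [iterate_succ]
  exacts [next_trB _, next_trA _, next_le _]

namespace IsCoupledRun

theorem trB_le_iterate [DecidableEq J] (hr : IsCoupledRun E F P S A C r) (hE : Monotone E)
    (hS : Sᴴ * S ≤ 1) (n : ℕ) : trB (r n) ≤ (E ∘ kraus P)^[n] (trB (r 0)) := by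
  refine (hE.comp (kraus_monotone P)).seq_le_seq (x := fun k => trB (r k))
    (y := fun k => (E ∘ kraus P)^[k] (trB (r 0))) n le_rfl (fun k _ => ?_) fun k _ => ?_
  · rw [hr.trB_succ]
    exact hE ((hr.separable k).trB_kraus_kronecker_le P hS)
  · rw [Function.iterate_succ_apply']

theorem trA_le_iterate [DecidableEq I] (hr : IsCoupledRun E F P S A C r) (hF : Monotone F)
    (hP : Pᴴ * P ≤ 1) (n : ℕ) : trA (r n) ≤ (F ∘ kraus S)^[n] (trA (r 0)) := by
  refine (hF.comp (kraus_monotone S)).seq_le_seq (x := fun k => trA (r k))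
    (y := fun k => (F ∘ kraus S)^[k] (trA (r 0))) n le_rfl (fun k _ => ?_) fun k _ => ?_
  · rw [hr.trA_succ]
    exact hF ((hr.separable k).trA_kraus_kronecker_le hP S)
  · rw [Function.iterate_succ_apply']

theorem tendsto_zero [DecidableEq J] (hr : IsCoupledRun E F P S A C r) (hE : Monotone E)
    (hS : Sᴴ * S ≤ 1) (h : Terminates E P Q) : Filter.Tendsto r Filter.atTop (𝓝 0) := by
  have trB_nonneg (n : ℕ) : 0 ≤ trB (r n) := (hr.separable n).trB_posSemidef.nonneg
  have trB_le := hr.trB_le_iterate hE hS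
  have bound_tendsto := (Complex.continuous_re.tendsto 0).comp
    (h.tendsto_trace_iterate fun n => nonneg_iff_posSemidef.mp ((trB_nonneg n).trans (trB_le n)))
  refine tendsto_zero_of_tendsto_re_trace (fun n => (hr.separable n).posSemidef.nonneg)
    (squeeze_zero (fun n => ?_) (fun n => ?_) bound_tendsto)
  · exact re_trace_nonneg (hr.separable n).posSemidef.nonneg
  · rw [← trace_trB]
    exact re_trace_le_re_trace (trB_le n)

theorem trB_exit_le [DecidableEq J] (hr : IsCoupledRun E F P S A C r) (hE : Monotone E)
    (hS : Sᴴ * S ≤ 1) (Q : Matrix I I ℂ) (hT : Tᴴ * T ≤ 1) (n : ℕ) :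
    trB (kraus (Q ⊗ₖ T) (r n)) ≤ whileExit E P Q (trB (r 0)) n :=
  ((hr.separable n).trB_kraus_kronecker_le Q hT).trans
    (kraus_monotone Q (hr.trB_le_iterate hE hS n))

theorem trA_exit_le [DecidableEq I] (hr : IsCoupledRun E F P S A C r) (hF : Monotone F)
    (hP : Pᴴ * P ≤ 1) (hQ : Qᴴ * Q ≤ 1) (T : Matrix J J ℂ) (n : ℕ) :
    trA (kraus (Q ⊗ₖ T) (r n)) ≤ whileExit F S T (trA (r 0)) n :=
  ((hr.separable n).trA_kraus_kronecker_le hQ T).trans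
    (kraus_monotone T (hr.trA_le_iterate hF hP n))

theorem summable_exit [DecidableEq J] (hr : IsCoupledRun E F P S A C r) (hE : Monotone E)
    (hS : Sᴴ * S ≤ 1) (hT : Tᴴ * T ≤ 1) (h : Terminates E P Q) :
    Summable fun n => kraus (Q ⊗ₖ T) (r n) := by
  have exit_nonneg (n : ℕ) : 0 ≤ kraus (Q ⊗ₖ T) (r n) :=
    ((hr.separable n).kraus_kronecker Q T).posSemidef.nonneg
  have bound_summable : Summable fun n => (whileExit E P Q (trB (r 0)) n).trace.re :=
    (h.hasSum (hr.separable 0).trB_posSemidef).summable.map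
      (Complex.reAddGroupHom.comp (traceAddMonoidHom I ℂ))
      (Complex.continuous_re.comp continuous_id.matrix_trace)
  refine summable_of_summable_re_trace exit_nonneg
    (bound_summable.of_nonneg_of_le (fun n => re_trace_nonneg (exit_nonneg n)) fun n => ?_)
  rw [← trace_trB]
  exact re_trace_le_re_trace (hr.trB_exit_le hE hS Q hT n)

theorem exists_coupling [DecidableEq I] [DecidableEq J] (hr : IsCoupledRun E F P S A C r)
    (hE : Monotone E) (hF : Monotone F) (hP : Pᴴ * P ≤ 1) (hQ : Qᴴ * Q ≤ 1) (hS : Sᴴ * S ≤ 1)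
    (hT : Tᴴ * T ≤ 1) (hterm : Terminates E P Q) (hterm' : Terminates F S T) :
    ∃ ρ, Separable ρ ∧ ∑' n, kraus (Q ⊗ₖ T) (r n) ≤ ρ ∧
      trB ρ = whileLoop E P Q (trB (r 0)) ∧ trA ρ = whileLoop F S T (trA (r 0)) := by
  have exit_hasSum := (hr.summable_exit hE hS hT hterm).hasSum
  have hr₀ := hr.separable 0
  refine exists_separable_ge_of_marginals_le
    (.of_hasSum (fun n => (hr.separable n).kraus_kronecker Q T) exit_hasSum) ?_ ?_ ?_
  · exact hasSum_le_hasSum_of_loewner (hr.trB_exit_le hE hS Q hT) (hasSum_trB exit_hasSum)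
      (hterm.hasSum hr₀.trB_posSemidef)
  · exact hasSum_le_hasSum_of_loewner (hr.trA_exit_le hF hP hQ T) (hasSum_trA exit_hasSum)
      (hterm'.hasSum hr₀.trA_posSemidef)
  · rw [(hterm _ hr₀.trB_posSemidef).2, (hterm' _ hr₀.trA_posSemidef).2, trace_trB, trace_trA]

theorem re_trace_le_sum_add_remainder
    (hr : IsCoupledRun E F P S A (measurePre (P ⊗ₖ S) (Q ⊗ₖ T) A B) r) (N : ℕ) :
    (measurePre (P ⊗ₖ S) (Q ⊗ₖ T) A B * r 0).trace.re ≤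
      (B * ∑ n ∈ Finset.range N, kraus (Q ⊗ₖ T) (r n)).trace.re +
        (measurePre (P ⊗ₖ S) (Q ⊗ₖ T) A B * r N).trace.re := by
  induction N with
  | zero => simp
  | succ N ih =>
    have unfold_once := congrArg Complex.re (trace_measurePre_mul (P ⊗ₖ S) (Q ⊗ₖ T) A B (r N))
    rw [Complex.add_re] at unfold_once
    rw [Finset.sum_range_succ, Matrix.mul_add, trace_add, Complex.add_re]
    linarith [hr.trace_le N]

theorem re_trace_le_exit [DecidableEq J]
    (hr : IsCoupledRun E F P S A (measurePre (P ⊗ₖ S) (Q ⊗ₖ T) A B) r) (hE : Monotone E)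
    (hS : Sᴴ * S ≤ 1) (hT : Tᴴ * T ≤ 1) (h : Terminates E P Q) :
    (measurePre (P ⊗ₖ S) (Q ⊗ₖ T) A B * r 0).trace.re ≤
      (B * ∑' n, kraus (Q ⊗ₖ T) (r n)).trace.re := by
  have continuous_expectation (D : Matrix (I × J) (I × J) ℂ) :
      Continuous fun ρ : Matrix (I × J) (I × J) ℂ => (D * ρ).trace.re := by fun_prop
  have exits_tendsto := ((continuous_expectation B).tendsto _).comp
    (hr.summable_exit hE hS hT h).hasSum.tendsto_sum_nat
  have remainder_tendsto :=
    ((continuous_expectation (measurePre (P ⊗ₖ S) (Q ⊗ₖ T) A B)).tendsto 0).comp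
      (hr.tendsto_zero hE hS h)
  simpa using ge_of_tendsto' (exits_tendsto.add remainder_tendsto)
    hr.re_trace_le_sum_add_remainder

end IsCoupledRun

theorem qRHL_jointWhile_general [DecidableEq I] [DecidableEq J] (hE : Monotone E) (hF : Monotone F)
    (hP : Pᴴ * P ≤ 1) (hQ : Qᴴ * Q ≤ 1) (hS : Sᴴ * S ≤ 1) (hT : Tᴴ * T ≤ 1)
    (hterm : Terminates E P Q) (hterm' : Terminates F S T) (hB : B.PosSemidef)
    (h : qRHL A E F (measurePre (P ⊗ₖ S) (Q ⊗ₖ T) A B)) :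
    qRHL (measurePre (P ⊗ₖ S) (Q ⊗ₖ T) A B) (whileLoop E P Q) (whileLoop F S T) B := by
  intro ρ _ hρ
  obtain ⟨r, rfl, hr⟩ := h.exists_isCoupledRun P S hρ
  obtain ⟨ρ', hρ', exits_le, hρ'B, hρ'A⟩ :=
    hr.exists_coupling hE hF hP hQ hS hT hterm hterm'
  exact ⟨ρ', hρ'.posSemidef, hρ', hρ'B, hρ'A, (hr.re_trace_le_exit hE hS hT hterm).trans
    (Complex.le_def.mp (trace_mul_le_trace_mul hB.nonneg exits_le)).1⟩

end CoupledRun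

section TensorFactors

open scoped MatrixOrder

variable {m n : Type*} [Fintype m] [Fintype n] [DecidableEq m] [DecidableEq n]

theorem conjTranspose_mul_kronecker_one_le_one {K L : Matrix m m ℂ}
    (h : Kᴴ * K + Lᴴ * L = 1) :
    (K ⊗ₖ (1 : Matrix n n ℂ))ᴴ * (K ⊗ₖ (1 : Matrix n n ℂ)) ≤ 1 := by
  have rest_nonneg : 0 ≤ (Lᴴ * L) ⊗ₖ (1 : Matrix n n ℂ) :=
    ((posSemidef_conjTranspose_mul_self L).kronecker .one).nonneg
  calc (K ⊗ₖ (1 : Matrix n n ℂ))ᴴ * (K ⊗ₖ (1 : Matrix n n ℂ))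
      = (Kᴴ * K) ⊗ₖ (1 : Matrix n n ℂ) := by
        rw [conjTranspose_kronecker, ← mul_kronecker_mul, conjTranspose_one, Matrix.mul_one]
    _ ≤ (Kᴴ * K) ⊗ₖ (1 : Matrix n n ℂ) + (Lᴴ * L) ⊗ₖ (1 : Matrix n n ℂ) :=
        le_add_of_nonneg_right rest_nonneg
    _ = 1 := by rw [← add_kronecker, h, one_kronecker_one]

theorem conj_one_kronecker_conj_kronecker_one (V : Matrix m m ℂ) (W : Matrix n n ℂ)
    (D : Matrix (m × n) (m × n) ℂ) :
    (V ⊗ₖ (1 : Matrix n n ℂ))ᴴ * ((1 : Matrix m m ℂ) ⊗ₖ W)ᴴ * D * ((1 : Matrix m m ℂ) ⊗ₖ W) *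
      (V ⊗ₖ (1 : Matrix n n ℂ)) = (V ⊗ₖ W)ᴴ * D * (V ⊗ₖ W) := by
  have factor : ((1 : Matrix m m ℂ) ⊗ₖ W) * (V ⊗ₖ (1 : Matrix n n ℂ)) = V ⊗ₖ W := by
    rw [← mul_kronecker_mul, Matrix.one_mul, Matrix.mul_one]
  simp only [← factor, conjTranspose_mul, Matrix.mul_assoc]

end TensorFactors

/-- Rule JointWhile: simultaneous while loops on both sides. -/
theorem qRHL_jointWhile {X X' Y Y' : Type*}
    [Fintype X] [Fintype X'] [Fintype Y] [Fintype Y']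
    [DecidableEq X] [DecidableEq X'] [DecidableEq Y] [DecidableEq Y']
    (Mt Mf : Matrix X X ℂ) (hM : Mtᴴ * Mt + Mfᴴ * Mf = 1)
    (Nt Nf : Matrix Y Y ℂ) (hN : Ntᴴ * Nt + Nfᴴ * Nf = 1)
    (E : Matrix (X × X') (X × X') ℂ →ₗ[ℂ] Matrix (X × X') (X × X') ℂ)
    (F : Matrix (Y × Y') (Y × Y') ℂ →ₗ[ℂ] Matrix (Y × Y') (Y × Y') ℂ)
    (hEpos : ∀ ρ : Matrix (X × X') (X × X') ℂ, ρ.PosSemidef → (E ρ).PosSemidef)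
    (hEtr : ∀ ρ : Matrix (X × X') (X × X') ℂ, Matrix.trace (E ρ) = Matrix.trace ρ)
    (hFpos : ∀ σ : Matrix (Y × Y') (Y × Y') ℂ, σ.PosSemidef → (F σ).PosSemidef)
    (hFtr : ∀ σ : Matrix (Y × Y') (Y × Y') ℂ, Matrix.trace (F σ) = Matrix.trace σ)
    -- one-step operations of the two loops
    (R1t R1f : Matrix (X × X') (X × X') ℂ → Matrix (X × X') (X × X') ℂ)
    (hR1t : R1t = fun ρ => (Mt ⊗ₖ (1 : Matrix X' X' ℂ)) * ρ * (Mt ⊗ₖ (1 : Matrix X' X' ℂ))ᴴ)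
    (hR1f : R1f = fun ρ => (Mf ⊗ₖ (1 : Matrix X' X' ℂ)) * ρ * (Mf ⊗ₖ (1 : Matrix X' X' ℂ))ᴴ)
    (R2t R2f : Matrix (Y × Y') (Y × Y') ℂ → Matrix (Y × Y') (Y × Y') ℂ)
    (hR2t : R2t = fun σ => (Nt ⊗ₖ (1 : Matrix Y' Y' ℂ)) * σ * (Nt ⊗ₖ (1 : Matrix Y' Y' ℂ))ᴴ)
    (hR2f : R2f = fun σ => (Nf ⊗ₖ (1 : Matrix Y' Y' ℂ)) * σ * (Nf ⊗ₖ (1 : Matrix Y' Y' ℂ))ᴴ)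
    -- termination of the two while loops
    (hterm1 : ∀ ρ : Matrix (X × X') (X × X') ℂ, ρ.PosSemidef →
      Summable (fun n : ℕ => R1f ((⇑E ∘ R1t)^[n] ρ)) ∧
      Matrix.trace (∑' n : ℕ, R1f ((⇑E ∘ R1t)^[n] ρ)) = Matrix.trace ρ)
    (hterm2 : ∀ σ : Matrix (Y × Y') (Y × Y') ℂ, σ.PosSemidef →
      Summable (fun n : ℕ => R2f ((⇑F ∘ R2t)^[n] σ)) ∧
      Matrix.trace (∑' n : ℕ, R2f ((⇑F ∘ R2t)^[n] σ)) = Matrix.trace σ)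
    (A B : Matrix ((X × X') × (Y × Y')) ((X × X') × (Y × Y')) ℂ)
    (hA : A.PosSemidef) (hB : B.PosSemidef)
    (C : Matrix ((X × X') × (Y × Y')) ((X × X') × (Y × Y')) ℂ)
    (hC : C =
      ((Mt ⊗ₖ (1 : Matrix X' X' ℂ)) ⊗ₖ (1 : Matrix (Y × Y') (Y × Y') ℂ))ᴴ *
        ((1 : Matrix (X × X') (X × X') ℂ) ⊗ₖ (Nt ⊗ₖ (1 : Matrix Y' Y' ℂ)))ᴴ *
        A *
        ((1 : Matrix (X × X') (X × X') ℂ) ⊗ₖ (Nt ⊗ₖ (1 : Matrix Y' Y' ℂ))) *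
        ((Mt ⊗ₖ (1 : Matrix X' X' ℂ)) ⊗ₖ (1 : Matrix (Y × Y') (Y × Y') ℂ)) +
      ((Mf ⊗ₖ (1 : Matrix X' X' ℂ)) ⊗ₖ (1 : Matrix (Y × Y') (Y × Y') ℂ))ᴴ *
        ((1 : Matrix (X × X') (X × X') ℂ) ⊗ₖ (Nf ⊗ₖ (1 : Matrix Y' Y' ℂ)))ᴴ *
        B *
        ((1 : Matrix (X × X') (X × X') ℂ) ⊗ₖ (Nf ⊗ₖ (1 : Matrix Y' Y' ℂ))) *
        ((Mf ⊗ₖ (1 : Matrix X' X' ℂ)) ⊗ₖ (1 : Matrix (Y × Y') (Y × Y') ℂ)))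
    (h : qRHL A E F C) :
    qRHL C
      (fun ρ => ∑' n : ℕ, R1f ((⇑E ∘ R1t)^[n] ρ))
      (fun σ => ∑' n : ℕ, R2f ((⇑F ∘ R2t)^[n] σ))
      B := by
  subst hR1t hR1f hR2t hR2f
  rw [conj_one_kronecker_conj_kronecker_one, conj_one_kronecker_conj_kronecker_one] at hC
  subst hC
  exact qRHL_jointWhile_general (monotone_of_map_posSemidef hEpos)
    (monotone_of_map_posSemidef hFpos)
    (conjTranspose_mul_kronecker_one_le_one hM)
    (conjTranspose_mul_kronecker_one_le_one ((add_comm _ _).trans hM))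
    (conjTranspose_mul_kronecker_one_le_one hN)
    (conjTranspose_mul_kronecker_one_le_one ((add_comm _ _).trans hN)) hterm1 hterm2 hB h
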